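/- For every integer d ≥ 2 there exists M = M(d) such that every (d+1)-crossing curve γ: I → R^d can be subdivided into at most M convex curves; that is, the interval I can be partitioned into at most M closed subintervals I_1, …, I_k (k ≤ M) such that the restriction of γ to each I_j is a d-crossing curve. -/

import Mathlib

open Set

/-- `h` is an (affine) hyperplane in `ℝ^d`: the solution set of a nontrivial
linear equation `∑ i, u i * x i = c`. -/
def IsHyperplane {d : ℕ} (h : Set (Fin d → ℝ)) : Prop :=
  ∃ (u : Fin d → ℝ) (c : ℝ), u ≠ 0 ∧ h = {x | ∑ i, u i * x i = c}

/-- A curve `γ` is `k`-crossing on the interval `I` if for every hyperplane `h`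
the set `{t ∈ I : γ t ∈ h}` has at most `k` elements. -/
def CurveCrossing {d : ℕ} (k : ℕ) (I : Set ℝ) (γ : ℝ → (Fin d → ℝ)) : Prop :=
  ∀ h : Set (Fin d → ℝ), IsHyperplane h → {t | t ∈ I ∧ γ t ∈ h}.encard ≤ (k : ℕ∞)

/-- The polygonal path `p 0 p 1 ⋯ p (n-1)`, as a subset of `ℝ^d`
(the union of its edges). -/
def PathSet {d n : ℕ} (p : Fin n → (Fin d → ℝ)) : Set (Fin d → ℝ) :=
  ⋃ (i : Fin n) (h : (i : ℕ) + 1 < n), segment ℝ (p i) (p ⟨(i : ℕ) + 1, h⟩)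

/-- A polygonal path is `k`-crossing if every hyperplane containing no edge of the
path intersects the path in at most `k` points. -/
def PathCrossing {d n : ℕ} (k : ℕ) (p : Fin n → (Fin d → ℝ)) : Prop :=
  ∀ h : Set (Fin d → ℝ), IsHyperplane h →
    (∀ (i : Fin n) (hi : (i : ℕ) + 1 < n), ¬ segment ℝ (p i) (p ⟨(i : ℕ) + 1, hi⟩) ⊆ h) →
    (PathSet p ∩ h).encard ≤ (k : ℕ∞)

/-- A point sequence in `ℝ^d` is in general position if every at most `d+1` of the
points are affinely independent. -/
def GeneralPosition {d n : ℕ} (p : Fin n → (Fin d → ℝ)) : Prop :=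
  ∀ s : Finset (Fin n), s.card ≤ d + 1 → AffineIndependent ℝ (fun i : s => p i)

/-- The sign (orientation) of an ordered `(d+1)`-tuple of points of `ℝ^d`: the sign of
the determinant of the `(d+1) × (d+1)` matrix whose `j`-th column is `(1, q j)`. -/
noncomputable def otSign {d : ℕ} (q : Fin (d + 1) → (Fin d → ℝ)) : ℝ :=
  Real.sign (Matrix.det (Matrix.of fun i j : Fin (d + 1) =>
    (Fin.cons (1 : ℝ) (q j) : Fin (d + 1) → ℝ) i))

/-- A point sequence is order-type homogeneous if all of its increasing-index
`(d+1)`-tuples have the same nonzero sign. -/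
def OrderTypeHomogeneous {d n : ℕ} (p : Fin n → (Fin d → ℝ)) : Prop :=
  ∃ σ : ℝ, σ ≠ 0 ∧ ∀ f : Fin (d + 1) → Fin n, StrictMono f →
    otSign (fun j => p (f j)) = σ

/-- The sign of a `(d+1)`-element subset of the index set of a point sequence:
the sign of the corresponding increasing-index `(d+1)`-tuple (junk value `0` if the
set does not have `d+1` elements). -/
noncomputable def finsetSign {d n : ℕ} (p : Fin n → (Fin d → ℝ)) (s : Finset (Fin n)) : ℝ :=
  if h : s.card = d + 1 then otSign (fun j => p ((s.orderIsoOfFin h) j : Fin n)) else 0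

/-- A point sequence in `ℝ^d` is in super-general position if for each `1 ≤ k ≤ d` its
projection to the first `k` coordinates is in general position. -/
def SuperGeneralPosition {d n : ℕ} (p : Fin n → (Fin d → ℝ)) : Prop :=
  ∀ (k : ℕ), 1 ≤ k → ∀ (hk : k ≤ d),
    GeneralPosition (fun i => fun j : Fin k => p i (Fin.castLE hk j))

/-- A point sequence in `ℝ^d` is super-order-type homogeneous if for each `1 ≤ k ≤ d` its
projection to the first `k` coordinates is order-type homogeneous. -/
def SuperOrderTypeHomogeneous {d n : ℕ} (p : Fin n → (Fin d → ℝ)) : Prop :=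
  ∀ (k : ℕ), 1 ≤ k → ∀ (hk : k ≤ d),
    OrderTypeHomogeneous (fun i => fun j : Fin k => p i (Fin.castLE hk j))

/-- `OTNum d n` is the smallest `N` such that every sequence of `N` points in general
position in `ℝ^d` contains an order-type homogeneous subsequence of length `n`. -/
noncomputable def OTNum (d n : ℕ) : ℕ :=
  sInf {N : ℕ | ∀ p : Fin N → (Fin d → ℝ), GeneralPosition p →
    ∃ f : Fin n → Fin N, StrictMono f ∧ OrderTypeHomogeneous (fun i => p (f i))}

/-- `COTNum d n` is the smallest `N` such that every sequence of `N` points in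
super-general position in `ℝ^d` contains a super-order-type homogeneous subsequence
of length `n`. -/
noncomputable def COTNum (d n : ℕ) : ℕ :=
  sInf {N : ℕ | ∀ p : Fin N → (Fin d → ℝ), SuperGeneralPosition p →
    ∃ f : Fin n → Fin N, StrictMono f ∧ SuperOrderTypeHomogeneous (fun i => p (f i))}

/-- The tower function: `twr 1 x = x` and `twr (i+1) x = 2 ^ twr i x`. -/
def twr (k x : ℕ) : ℕ := (fun y => 2 ^ y)^[k - 1] x

/-- `t` is an `ε`-sample of the interval `[a, b]`: an increasing tuple of points of
`[a, b]` meeting every subinterval of `[a, b]` of length `ε`. -/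
def IsEpsSample (a b ε : ℝ) {n : ℕ} (t : Fin n → ℝ) : Prop :=
  StrictMono t ∧ (∀ i, t i ∈ Set.Icc a b) ∧
    ∀ x : ℝ, Set.Icc x (x + ε) ⊆ Set.Icc a b → ∃ i, t i ∈ Set.Icc x (x + ε)

/-- All `(k+1)`-element subsets of the index interval `[a, b]` have the same sign. -/
def IntervalHomog {n : ℕ} (k : ℕ) (sgn : Finset (Fin n) → Bool) (a b : Fin n) : Prop :=
  ∃ σ : Bool, ∀ s : Finset (Fin n), s.card = k + 1 → (∀ i ∈ s, a ≤ i ∧ i ≤ b) → sgn s = σ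

/-- `c 0 = 0 < c 1 < ⋯ < c m = n - 1` are the cut points of the greedy partition of the
`k`-sequence on `Fin n` with sign function `sgn` into the `m` blocks
`[c 0, c 1], [c 1, c 2], …, [c (m-1), c m]` (consecutive blocks overlap in one point):
each block has all its `(k+1)`-element subsets of the same sign, and each block is
maximal with this property (cannot be extended to the right). -/
def IsGreedyPartition {n : ℕ} (k : ℕ) (sgn : Finset (Fin n) → Bool) (m : ℕ)
    (c : Fin (m + 1) → Fin n) : Prop :=
  (c 0 : ℕ) = 0 ∧ (c (Fin.last m) : ℕ) = n - 1 ∧ StrictMono c ∧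
    (∀ j : Fin m, IntervalHomog k sgn (c j.castSucc) (c j.succ)) ∧
    (∀ j : Fin m, ∀ e : Fin n, c j.succ < e → ¬ IntervalHomog k sgn (c j.castSucc) e)

/-- A `k`-sequence is a flip `k`-sequence if for every `k`-element subset `A` of indices
the sign sequence `(sgn (insert i A) : i ∉ A)` (indices in increasing order) has at most
one sign change; for `±`-valued sequences this says there are no positions `i < j < l`
with `sgn (insert i A) ≠ sgn (insert j A)` and `sgn (insert j A) ≠ sgn (insert l A)`. -/
def FlipSeq {n : ℕ} (k : ℕ) (sgn : Finset (Fin n) → Bool) : Prop :=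
  ∀ A : Finset (Fin n), A.card = k →
    ¬ ∃ i j l : Fin n, i < j ∧ j < l ∧ i ∉ A ∧ j ∉ A ∧ l ∉ A ∧
      sgn (insert i A) ≠ sgn (insert j A) ∧ sgn (insert j A) ≠ sgn (insert l A)

/-!
Pass to homogeneous coordinates `F t = (1, γ t)`, so that hyperplanes become linear functionals, and
record the sign of the determinant of the points of each `(d + 1)`-element set of parameters.

Since a functional has at most `d + 1` zeros along `F`, its signs cannot alternate on `d + 3`
parameters. Applied to the functional through `d` points of the curve, this gives the flip property:
inserting a further parameter, the sign changes at most once as the parameter moves to the right.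
It follows that a homogeneous set of points lying half to the left and half to the right of an
interval forces its own sign on that interval. Were there many consecutive intervals on which both
signs occur, Ramsey's theorem would give a homogeneous set among one point from each of them, and
the interval of the median point would contradict this. So the greedy subdivision into intervals of
constant sign has boundedly many pieces.

Constant sign on an interval does not exclude dependent sets of parameters, but if one lies in the
left half, complete it to `d + 1` parameters by generic ones. Putting one of these in the right half
or between two of the dependent parameters leads to opposite signs. Hence on each half all
`(d + 1)`-element sets are independent, which is to say that the half is a convex curve.
-/

open scoped Finset

/-! ### Ramsey's theorem for uniform hypergraphs -/

section Ramsey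

variable {α : Type*}

/-- The arrow relation `N → (p, q)ⁿ` of Ramsey theory: every two-colouring of the `n`-subsets of a
set with at least `N` elements of `α` has a monochromatic set of size `p` in the first colour
(`f` holds) or of size `q` in the second one (`f` fails). -/
def RamseyArrow (α : Type*) (N n p q : ℕ) : Prop :=
  ∀ S : Finset α, N ≤ #S → ∀ f : Finset α → Prop,
    (∃ T ⊆ S, #T = p ∧ ∀ A ∈ T.powersetCard n, f A) ∨
      (∃ T ⊆ S, #T = q ∧ ∀ A ∈ T.powersetCard n, ¬ f A)

theorem RamseyArrow.of_uniformity_zero (p q : ℕ) : RamseyArrow α (p + q) 0 p q := by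
  intro S hS f
  obtain ⟨T, hTS, hT⟩ := Finset.exists_subset_card_eq (show p ≤ #S by lia)
  obtain ⟨U, hUS, hU⟩ := Finset.exists_subset_card_eq (show q ≤ #S by lia)
  by_cases hf : f ∅
  · exact .inl ⟨T, hTS, hT, by simpa using hf⟩
  · exact .inr ⟨U, hUS, hU, by simpa using hf⟩

theorem RamseyArrow.zero_left (n q : ℕ) : RamseyArrow α 0 (n + 1) 0 q :=
  fun S _ _ => .inl ⟨∅, S.empty_subset, rfl, by simp⟩

theorem RamseyArrow.zero_right (n p : ℕ) : RamseyArrow α 0 (n + 1) p 0 :=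
  fun S _ _ => .inr ⟨∅, S.empty_subset, rfl, by simp⟩

theorem forall_mem_powersetCard_insert [DecidableEq α] {f : Finset α → Prop} {n : ℕ} {x : α}
    {T U : Finset α} (hUT : U ⊆ T) (hx : x ∉ U) (hT : ∀ A ∈ T.powersetCard n, f (insert x A))
    (hU : ∀ A ∈ U.powersetCard (n + 1), f A) :
    ∀ A ∈ (insert x U).powersetCard (n + 1), f A := by
  intro A hA
  rw [Finset.powersetCard_succ_insert hx, Finset.mem_union, Finset.mem_image] at hA
  obtain hA | ⟨B, hB, rfl⟩ := hA
  · exact hU A hA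
  · exact hT B (Finset.powersetCard_mono hUT hB)

theorem RamseyArrow.succ_succ {N N₁ N₂ n p q : ℕ} (h₁ : RamseyArrow α N₁ (n + 1) p (q + 1))
    (h₂ : RamseyArrow α N₂ (n + 1) (p + 1) q) (h : RamseyArrow α N n N₁ N₂) :
    RamseyArrow α (N + 1) (n + 1) (p + 1) (q + 1) := by
  classical
  intro S hS f
  obtain ⟨x, hx⟩ : S.Nonempty := Finset.card_pos.1 (by lia)
  have hN : N ≤ #(S.erase x) := by rw [Finset.card_erase_of_mem hx]; lia
  have enlarge {T U : Finset α} (hT : T ⊆ S.erase x) (hUT : U ⊆ T) : U ⊆ S :=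
    (hUT.trans hT).trans (S.erase_subset x)
  have extend {g : Finset α → Prop} {T U : Finset α} {m : ℕ} (hT : T ⊆ S.erase x) (hUT : U ⊆ T)
      (hU : #U = m) (hTg : ∀ A ∈ T.powersetCard n, g (insert x A))
      (hUg : ∀ A ∈ U.powersetCard (n + 1), g A) :
      ∃ V ⊆ S, #V = m + 1 ∧ ∀ A ∈ V.powersetCard (n + 1), g A := by
    have hxU : x ∉ U := fun h => Finset.notMem_erase x S (hT (hUT h))
    exact ⟨insert x U, Finset.insert_subset hx (enlarge hT hUT),
      by rw [Finset.card_insert_of_notMem hxU, hU],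
      forall_mem_powersetCard_insert hUT hxU hTg hUg⟩
  obtain ⟨T, hT, hTc, hTf⟩ | ⟨T, hT, hTc, hTf⟩ := h (S.erase x) hN fun A => f (insert x A)
  · obtain ⟨U, hUT, hU, hUf⟩ | ⟨U, hUT, hU, hUf⟩ := h₁ T hTc.ge f
    · exact .inl (extend hT hUT hU hTf hUf)
    · exact .inr ⟨U, enlarge hT hUT, hU, hUf⟩
  · obtain ⟨U, hUT, hU, hUf⟩ | ⟨U, hUT, hU, hUf⟩ := h₂ T hTc.ge f
    · exact .inl ⟨U, enlarge hT hUT, hU, hUf⟩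
    · exact .inr (extend hT hUT hU hTf hUf)

theorem exists_ramseyArrow (α : Type*) (n p q : ℕ) : ∃ N, RamseyArrow α N n p q := by
  induction n generalizing p q with
  | zero => exact ⟨_, .of_uniformity_zero p q⟩
  | succ n ih =>
    induction p generalizing q with
    | zero => exact ⟨0, .zero_left n q⟩
    | succ p ihp =>
      induction q with
      | zero => exact ⟨0, .zero_right n (p + 1)⟩
      | succ q ihq =>
        obtain ⟨N₁, h₁⟩ := ihp (q + 1)
        obtain ⟨N₂, h₂⟩ := ihq
        obtain ⟨N, h⟩ := ih N₁ N₂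
        exact ⟨N + 1, h₁.succ_succ h₂ h⟩

end Ramsey

/-! ### Greedy subdivision of an interval -/

section Subdivision

/-- The pairs `(u, w)` of consecutive points of a subdivision of `[a, b]` all of whose pieces
`[u, w]` satisfy `R`; such a subdivision of `[a, b]` is a `RelSeries` from `a` to `b`. -/
def subdivisionRel {α : Type*} [LE α] (a b : α) (R : α → α → Prop) : SetRel α α :=
  {p | a ≤ p.1 ∧ p.1 ≤ p.2 ∧ p.2 ≤ b ∧ R p.1 p.2}

@[simp]
theorem mem_subdivisionRel {α : Type*} [LE α] {a b u w : α} {R : α → α → Prop} :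
    (u, w) ∈ subdivisionRel a b R ↔ a ≤ u ∧ u ≤ w ∧ w ≤ b ∧ R u w :=
  Iff.rfl

theorem monotone_of_subdivisionRel {α : Type*} [Preorder α] {a b : α}
    {R : α → α → Prop} (p : RelSeries (subdivisionRel a b R)) : Monotone p.toFun :=
  Fin.monotone_iff_le_succ.2 fun i => (p.step i).2.1

theorem exists_relSeries_bisection {α : Type*} {r s : SetRel α α}
    (h : ∀ x y, (x, y) ∈ r → ∃ m, (x, m) ∈ s ∧ (m, y) ∈ s) (p : RelSeries r) :
    ∃ q : RelSeries s, q.length = 2 * p.length ∧ q.head = p.head ∧ q.last = p.last := by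
  induction p using RelSeries.inductionOn with
  | singleton x => exact ⟨.singleton s x, rfl, rfl, rfl⟩
  | cons p x hx ih =>
    obtain ⟨q, hlen, hhead, hlast⟩ := ih
    obtain ⟨m, hxm, hmp⟩ := h _ _ hx
    refine ⟨(q.cons m (by rwa [hhead])).cons x (by simpa using hxm), ?_, ?_, ?_⟩
    · simp only [RelSeries.cons_length, hlen]; ring
    · simp
    · simpa using hlast

theorem exists_relSeries_head_gt {α : Type*} [LinearOrder α] {a b : α} {B : α → α → Prop}
    (hmono : ∀ ⦃u w u' w'⦄, B u w → u' ≤ u → w ≤ w' → B u' w')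
    (hirrefl : ∀ u, ¬ B u u) (hleft : ∀ ⦃u w⦄, B u w → ∃ u', u < u' ∧ B u' w)
    (p : RelSeries (subdivisionRel a b B)) (ha : a ≤ p.head) (hb : p.head < b) :
    ∃ q : RelSeries (subdivisionRel a b B),
      q.length = p.length ∧ p.head < q.head ∧ q.head ≤ b := by
  obtain hp | hp := eq_or_ne p.length 0
  · exact ⟨.singleton _ b, by simp [hp], by simpa using hb, by simp⟩
  · set w := (p.tail hp).head with hw
    have hstep : (p.head, w) ∈ subdivisionRel a b B := by
      rw [hw, RelSeries.head_tail]
      have h1 : (1 : Fin (p.length + 1)) = (⟨0, Nat.pos_of_ne_zero hp⟩ : Fin p.length).succ :=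
        Fin.ext (Nat.mod_eq_of_lt (Nat.succ_lt_succ (Nat.pos_of_ne_zero hp)))
      exact h1 ▸ p.step ⟨0, Nat.pos_of_ne_zero hp⟩
    obtain ⟨-, -, hwb, hB⟩ := mem_subdivisionRel.1 hstep
    obtain ⟨u, hu, hBu⟩ := hleft hB
    have huw : u ≤ w := le_of_not_ge fun h => hirrefl u (hmono hBu le_rfl h)
    have hstep' : (u, w) ∈ subdivisionRel a b B :=
      mem_subdivisionRel.2 ⟨ha.trans hu.le, huw, hwb, hBu⟩
    refine ⟨(p.tail hp).cons u hstep', ?_, by simpa using hu, by simpa using huw.trans hwb⟩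
    simp only [RelSeries.cons_length, RelSeries.tail_length]
    lia

/-- The greedy subdivision: from `u` the next point is the largest `c` such that `[u, c]` is good,
so that `[u, w]` is bad for every `w > c`. -/
theorem exists_relSeries_bad_or_good {α : Type*} [ConditionallyCompleteLinearOrder α] {a b : α}
    {B : α → α → Prop} (hmono : ∀ ⦃u w u' w'⦄, B u w → u' ≤ u → w ≤ w' → B u' w')
    (hirrefl : ∀ u, ¬ B u u) (hleft : ∀ ⦃u w⦄, B u w → ∃ u', u < u' ∧ B u' w)
    (hright : ∀ ⦃u w⦄, B u w → ∃ w', w' < w ∧ B u w') (N : ℕ) {u : α} (hau : a ≤ u)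
    (hub : u ≤ b) :
    (∃ p : RelSeries (subdivisionRel a b B), p.length = N ∧ p.head = u) ∨
      ∃ p : RelSeries (subdivisionRel a b fun x y => ¬ B x y),
        p.length ≤ N ∧ p.head = u ∧ p.last = b := by
  induction N generalizing u with
  | zero => exact .inl ⟨.singleton _ u, rfl, rfl⟩
  | succ N ih =>
    set A : Set α := {w | u ≤ w ∧ w ≤ b ∧ ¬ B u w}
    have huA : u ∈ A := ⟨le_rfl, hub, hirrefl u⟩
    have hA : BddAbove A := ⟨b, fun w hw => hw.2.1⟩
    set c := sSup A
    have huc : u ≤ c := le_csSup hA huA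
    have hcb : c ≤ b := csSup_le ⟨u, huA⟩ fun w hw => hw.2.1
    have hgood : ¬ B u c := fun hB => by
      obtain ⟨w', hw', hB'⟩ := hright hB
      obtain ⟨w, hw, hlt⟩ := exists_lt_of_lt_csSup ⟨u, huA⟩ hw'
      exact hw.2.2 (hmono hB' le_rfl hlt.le)
    have hbad {w : α} (hcw : c < w) (hwb : w ≤ b) : B u w := by
      by_contra hB
      exact (le_csSup hA ⟨huc.trans hcw.le, hwb, hB⟩).not_gt hcw
    obtain ⟨p, hlen, hhead⟩ | ⟨p, hlen, hhead, hlast⟩ := ih (hau.trans huc) hcb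
    · obtain hcb | hcb := hcb.eq_or_lt
      · have hstep : (u, b) ∈ subdivisionRel a b fun x y => ¬ B x y :=
          mem_subdivisionRel.2 ⟨hau, hub, le_rfl, hcb ▸ hgood⟩
        exact .inr ⟨(RelSeries.singleton _ b).cons u hstep, Nat.le_add_left 1 N, rfl,
          RelSeries.last_cons _ _ _⟩
      · obtain ⟨q, hq, hcq, hqb⟩ := exists_relSeries_head_gt hmono hirrefl hleft p
          (hhead ▸ hau.trans huc) (hhead ▸ hcb)
        rw [hhead] at hcq
        have hstep : (u, q.head) ∈ subdivisionRel a b B :=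
          mem_subdivisionRel.2 ⟨hau, huc.trans hcq.le, hqb, hbad hcq hqb⟩
        exact .inl ⟨q.cons u hstep, by simp [hq, hlen], by simp⟩
    · have hstep : (u, p.head) ∈ subdivisionRel a b fun x y => ¬ B x y :=
        mem_subdivisionRel.2 (hhead.symm ▸ ⟨hau, huc, hcb, hgood⟩)
      exact .inr ⟨p.cons u hstep, by simpa using hlen, by simp, by simpa using hlast⟩

end Subdivision

/-! ### The orientation of a finite set of parameters -/

section Orientation

/-- The orientation of the points `F s`, `s ∈ S`, on a curve `F` in `ℝⁿ`, for `#S = n`. Up to a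
positive factor it is the determinant of the points in increasing order of the parameters: by
`orient_image` it is that determinant times the Vandermonde determinant of the parameters, a product
that does not depend on how `S` is enumerated. -/
noncomputable def orient {n : ℕ} (F : ℝ → Fin n → ℝ) (S : Finset ℝ) : ℝ :=
  (Matrix.of fun i j : Fin n => ∑ s ∈ S, F s i * s ^ (j : ℕ)).det

theorem orient_image {n : ℕ} (F : ℝ → Fin n → ℝ) {t : Fin n → ℝ} (ht : Function.Injective t) :
    orient F (Finset.univ.image t) =
      (Matrix.of fun i => F (t i)).det * (Matrix.vandermonde t).det := by
  have hmul : (Matrix.of fun i j : Fin n => ∑ s ∈ Finset.univ.image t, F s i * s ^ (j : ℕ)) =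
      (Matrix.of fun i => F (t i)).transpose * Matrix.vandermonde t := by
    ext i j
    simp [Matrix.mul_apply, Matrix.vandermonde_apply, Finset.sum_image ht.injOn]
  rw [orient, hmul, Matrix.det_mul, Matrix.det_transpose]

theorem exists_injective_image_eq {α : Type*} [LinearOrder α] {n : ℕ} {S : Finset α}
    (hS : #S = n) : ∃ t : Fin n → α, Function.Injective t ∧ Finset.univ.image t = S :=
  ⟨S.orderEmbOfFin hS, (S.orderEmbOfFin hS).injective, S.image_orderEmbOfFin_univ hS⟩

theorem orient_ne_zero_iff {n : ℕ} (F : ℝ → Fin n → ℝ) {S : Finset ℝ} (hS : #S = n) :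
    orient F S ≠ 0 ↔ LinearIndepOn ℝ F (S : Set ℝ) := by
  obtain ⟨t, ht, rfl⟩ := exists_injective_image_eq hS
  rw [orient_image F ht, mul_ne_zero_iff, Matrix.det_vandermonde_ne_zero_iff, and_iff_left ht,
    Finset.coe_image, Finset.coe_univ, Set.image_univ, linearIndepOn_range_iff ht,
    ← isUnit_iff_ne_zero, ← Matrix.isUnit_iff_isUnit_det,
    ← Matrix.linearIndependent_rows_iff_isUnit]
  rfl

theorem det_vandermonde_cons {R : Type*} [CommRing R] {d : ℕ} (s : R) (t : Fin d → R) :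
    (Matrix.vandermonde (Fin.cons s t : Fin (d + 1) → R)).det =
      (∏ i, (t i - s)) * (Matrix.vandermonde t).det := by
  rw [Matrix.det_vandermonde, Matrix.det_vandermonde, Fin.prod_univ_succ]
  simp [Fin.prod_Ioi_succ]

theorem exists_orient_insert_eq {d : ℕ} (F : ℝ → Fin (d + 1) → ℝ) {E : Finset ℝ} (hE : #E = d) :
    ∃ φ : (Fin (d + 1) → ℝ) →ₗ[ℝ] ℝ, (∀ e ∈ E, φ (F e) = 0) ∧
      ∀ s ∉ E, orient F (insert s E) = φ (F s) * ∏ e ∈ E, (s - e) := by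
  obtain ⟨t, ht, himage⟩ := exists_injective_image_eq hE
  let φ : (Fin (d + 1) → ℝ) →ₗ[ℝ] ℝ :=
    (Matrix.detRowAlternating (R := ℝ)).toMultilinearMap.toLinearMap
      (Fin.cons 0 fun i => F (t i)) 0
  have hφ (s : ℝ) :
      φ (F s) = (Matrix.of fun i => F ((Fin.cons s t : Fin (d + 1) → ℝ) i)).det := by
    change Matrix.det _ = _
    congr 1
    ext i j
    cases i using Fin.cases <;> simp
  refine ⟨((-1) ^ d * (Matrix.vandermonde t).det) • φ, ?_, fun s hs => ?_⟩
  · rw [← himage]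
    simp only [Finset.mem_image, Finset.mem_univ, true_and, forall_exists_index,
      forall_apply_eq_imp_iff, LinearMap.smul_apply, hφ]
    intro i
    rw [Matrix.det_zero_of_row_eq (Fin.succ_ne_zero i), smul_zero]
    ext j
    simp
  · have hcons : Function.Injective (Fin.cons s t : Fin (d + 1) → ℝ) :=
      Fin.cons_injective_iff.2 ⟨by simpa [← himage] using hs, ht⟩
    have hinsert : insert s E = Finset.univ.image (Fin.cons s t : Fin (d + 1) → ℝ) := by
      ext x
      simp [← himage, Fin.exists_fin_succ, eq_comm]
    have hprod : ∏ i, (t i - s) = (-1) ^ d * ∏ e ∈ E, (s - e) := by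
      rw [← himage, Finset.prod_image ht.injOn]
      simpa using Finset.prod_neg (s := Finset.univ) fun i => s - t i
    rw [hinsert, orient_image F hcons, ← hφ, det_vandermonde_cons, hprod, LinearMap.smul_apply,
      smul_eq_mul]
    ring

end Orientation

/-! ### Sign alternation and the flip property -/

section Flip

/-- Every nonzero linear functional has at most `k` zeros along `F` on `I`: the linear counterpart
of `k`-crossing, in which the hyperplanes pass through the origin. -/
def ZerosAtMost {V : Type*} [AddCommGroup V] [Module ℝ V] (k : ℕ) (I : Set ℝ) (F : ℝ → V) : Prop :=
  ∀ φ : Module.Dual ℝ V, φ ≠ 0 → {t | t ∈ I ∧ φ (F t) = 0}.encard ≤ k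

/-- The signs of `f` alternate along `S`, the sign at the largest point being that of `σ`: the
product over `S.erase s` is positive or negative according to the parity of the number of points of
`S` above `s`. -/
def AlternatesOn (σ : ℝ) (f : ℝ → ℝ) (S : Finset ℝ) : Prop :=
  ∀ s ∈ S, 0 < σ * (f s * ∏ u ∈ S.erase s, (s - u))

theorem AlternatesOn.of_insert {σ m : ℝ} {f : ℝ → ℝ} {S : Finset ℝ} (hm : ∀ s ∈ S, s < m)
    (h : AlternatesOn σ f (insert m S)) : AlternatesOn (-σ) f S := by
  intro s hs
  have hmS : m ∉ S := fun hmS => (hm m hmS).false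
  have hpos := h s (Finset.mem_insert_of_mem hs)
  rw [Finset.erase_insert_of_ne (hm s hs).ne', Finset.prod_insert (by simp [hmS])] at hpos
  refine pos_of_mul_pos_left ?_ (sub_pos.2 (hm s hs)).le
  linarith

theorem AlternatesOn.pos_max {σ m : ℝ} {f : ℝ → ℝ} {S : Finset ℝ} (h : AlternatesOn σ f S)
    (hm : m ∈ S) (hmax : ∀ s ∈ S, s ≤ m) : 0 < σ * f m := by
  have hprod : 0 < ∏ u ∈ S.erase m, (m - u) := Finset.prod_pos fun u hu =>
    sub_pos.2 (lt_of_le_of_ne (hmax u (Finset.mem_of_mem_erase hu)) (Finset.ne_of_mem_erase hu))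
  exact pos_of_mul_pos_left (by simpa [mul_assoc] using h m hm) hprod.le

theorem AlternatesOn.exists_zeros {f : ℝ → ℝ} {I : Set ℝ} [I.OrdConnected] (hf : ContinuousOn f I)
    {S : Finset ℝ} (hS : S.Nonempty) (hSI : (S : Set ℝ) ⊆ I) {σ : ℝ} (h : AlternatesOn σ f S) :
    ∃ Z : Finset ℝ, #Z + 1 = #S ∧ ∀ z ∈ Z, z ∈ I ∧ f z = 0 ∧ ∃ s ∈ S, z < s := by
  induction S using Finset.induction_on_max generalizing σ with
  | empty => exact absurd rfl hS.ne_empty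
  | insert m S hm ih =>
    have hmS : m ∉ S := fun hmS => (hm m hmS).false
    obtain rfl | hS' := S.eq_empty_or_nonempty
    · exact ⟨∅, by simp⟩
    obtain ⟨hmI, hSI⟩ : m ∈ I ∧ (S : Set ℝ) ⊆ I := by
      simpa [Set.insert_subset_iff] using hSI
    have hS := h.of_insert hm
    obtain ⟨Z, hZcard, hZ⟩ := ih hS' hSI hS
    set M := S.max' hS'
    have hMS : M ∈ S := S.max'_mem hS'
    have hneg : σ * f M < 0 := by
      have := hS.pos_max hMS S.le_max'
      linarith
    have hpos : 0 < σ * f m := h.pos_max (S.mem_insert_self m) fun s hs => by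
      obtain rfl | hs := Finset.mem_insert.1 hs
      exacts [le_rfl, (hm s hs).le]
    obtain ⟨z, ⟨hMz, hzm⟩, hz⟩ := intermediate_value_Ioo (hm M hMS).le
      ((hf.mono (Set.OrdConnected.out ‹_› (hSI hMS) hmI)).const_mul σ) ⟨hneg, hpos⟩
    have hσ : σ ≠ 0 := left_ne_zero_of_mul hpos.ne'
    have hzZ : z ∉ Z := fun hzZ => by
      obtain ⟨-, -, s, hs, hzs⟩ := hZ z hzZ
      exact ((hzs.trans_le (S.le_max' s hs)).trans hMz).false
    refine ⟨insert z Z, ?_, fun x hx => ?_⟩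
    · rw [Finset.card_insert_of_notMem hzZ, hZcard, Finset.card_insert_of_notMem hmS]
    · obtain rfl | hx := Finset.mem_insert.1 hx
      · exact ⟨Set.OrdConnected.out ‹_› (hSI hMS) hmI ⟨hMz.le, hzm.le⟩,
          (mul_eq_zero.1 hz).resolve_left hσ, m, S.mem_insert_self m, hzm⟩
      · obtain ⟨hxI, hfx, s, hs, hxs⟩ := hZ x hx
        exact ⟨hxI, hfx, s, Finset.mem_insert_of_mem hs, hxs⟩

theorem ZerosAtMost.card_le_of_alternatesOn {V : Type*} [AddCommGroup V] [Module ℝ V]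
    [TopologicalSpace V] [IsTopologicalAddGroup V] [ContinuousSMul ℝ V] [T2Space V]
    [FiniteDimensional ℝ V] {k : ℕ} {I : Set ℝ} [I.OrdConnected] {F : ℝ → V}
    (hz : ZerosAtMost k I F) (hF : ContinuousOn F I) (φ : Module.Dual ℝ V) {S : Finset ℝ}
    (hSI : (S : Set ℝ) ⊆ I) {σ : ℝ} (h : AlternatesOn σ (fun t => φ (F t)) S) : #S ≤ k + 1 := by
  obtain rfl | hS := S.eq_empty_or_nonempty
  · simp
  have hφ : φ ≠ 0 := by
    rintro rfl
    simpa using h _ hS.choose_spec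
  have hcont : ContinuousOn (fun t => φ (F t)) I :=
    (LinearMap.continuous_of_finiteDimensional φ).comp_continuousOn hF
  obtain ⟨Z, hcard, hZ⟩ := h.exists_zeros hcont hS hSI
  have hsub : (Z : Set ℝ) ⊆ {t | t ∈ I ∧ φ (F t) = 0} :=
    fun z hzZ => ⟨(hZ z hzZ).1, (hZ z hzZ).2.1⟩
  have hle := (Set.encard_le_encard hsub).trans (hz φ hφ)
  rw [Set.encard_coe_eq_coe_finsetCard, Nat.cast_le] at hle
  lia

theorem exists_dual_eq_of_linearIndepOn {ι K V : Type*} [Field K] [AddCommGroup V] [Module K V]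
    {F : ι → V} {E : Set ι} (hF : LinearIndepOn K F E) (g : ι → K) :
    ∃ ψ : Module.Dual K V, ∀ e ∈ E, ψ (F e) = g e := by
  let b := Module.Basis.span hF
  obtain ⟨ψ, hψ⟩ := LinearMap.exists_extend (b.constr K fun x : E => g x)
  refine ⟨ψ, fun e he => ?_⟩
  have hb : (b ⟨e, he⟩ : V) = F e :=
    congrArg Subtype.val (Module.Basis.span_apply hF ⟨e, he⟩)
  rw [← hb, ← b.constr_basis K (fun x : E => g x) ⟨e, he⟩, ← hψ]
  rfl

open Filter Topology in
theorem exists_dual_pos_of_nonneg {ι V : Type*} [AddCommGroup V] [Module ℝ V] {F : ι → V}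
    {E : Set ι} (hF : LinearIndepOn ℝ F E) {S : Finset ι} {w : ι → ℝ} {φ : Module.Dual ℝ V}
    (hw : ∀ e ∈ E, w e ≠ 0) (hE : ∀ e ∈ E, 0 ≤ w e * φ (F e))
    (hS : ∀ s ∈ S, s ∉ E → 0 < w s * φ (F s)) :
    ∃ φ' : Module.Dual ℝ V, ∀ s ∈ S, 0 < w s * φ' (F s) := by
  obtain ⟨ψ, hψ⟩ := exists_dual_eq_of_linearIndepOn hF w
  have hsmall (s : ι) (hs : s ∈ S) : ∀ᶠ ε : ℝ in 𝓝[>] 0, 0 < w s * (φ + ε • ψ) (F s) := by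
    by_cases hsE : s ∈ E
    · filter_upwards [self_mem_nhdsWithin] with ε (hε : 0 < ε)
      have := mul_pos hε (mul_self_pos.2 (hw s hsE))
      simp only [LinearMap.add_apply, LinearMap.smul_apply, hψ s hsE, smul_eq_mul]
      linarith [hE s hsE]
    · have hlim : Tendsto (fun ε : ℝ => w s * (φ + ε • ψ) (F s)) (𝓝 0) (𝓝 (w s * φ (F s))) := by
        have hcont : Continuous fun ε : ℝ => w s * (φ (F s) + ε * ψ (F s)) := by fun_prop
        simpa using hcont.tendsto 0
      exact (hlim.eventually_const_lt (hS s hs hsE)).filter_mono nhdsWithin_le_nhds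
  obtain ⟨ε, hε⟩ := ((Filter.eventually_all_finset S).2 hsmall).exists
  exact ⟨_, hε⟩

theorem prod_erase_insert_insert_insert {R : Type*} [CommRing R] [DecidableEq R] {x y z : R}
    {E : Finset R} (hxy : x ≠ y) (hxz : x ≠ z) (hyz : y ≠ z) (hx : x ∉ E) (hy : y ∉ E)
    (hz : z ∉ E) :
    ∏ u ∈ (insert x (insert y (insert z E))).erase x, (x - u) =
      (x - y) * (x - z) * ∏ e ∈ E, (x - e) := by
  rw [Finset.erase_insert (by simp [hxy, hxz, hx]), Finset.prod_insert (by simp [hyz, hy]),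
    Finset.prod_insert hz, mul_assoc]

variable {d : ℕ} {F : ℝ → Fin (d + 1) → ℝ} {I : Set ℝ} [I.OrdConnected]

/-- A violation would make the functional through `E` alternate on `i < j < l` and, after a small
perturbation, also on `E`: altogether on `d + 3` points. -/
theorem orient_insert_nonneg_of_between (hF : ContinuousOn F I) (hz : ZerosAtMost (d + 1) I F)
    {E : Finset ℝ} (hE : #E = d) (hEI : (E : Set ℝ) ⊆ I) (hindep : LinearIndepOn ℝ F (E : Set ℝ))
    {i j l : ℝ} (hij : i < j) (hjl : j < l) (hiI : i ∈ I) (hlI : l ∈ I) (hi : i ∉ E) (hj : j ∉ E)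
    (hl : l ∉ E) {σ : ℝ} (hσi : 0 < σ * orient F (insert i E))
    (hσl : 0 < σ * orient F (insert l E)) : 0 ≤ σ * orient F (insert j E) := by
  obtain ⟨φ, hφE, hφ⟩ := exists_orient_insert_eq F hE
  rw [hφ i hi] at hσi
  rw [hφ l hl] at hσl
  rw [hφ j hj]
  by_contra! hσj
  have hil := hij.trans hjl
  set S : Finset ℝ := insert i (insert j (insert l E)) with hS
  have hSj : S = insert j (insert i (insert l E)) := Finset.insert_comm _ _ _
  have hSl : S = insert l (insert i (insert j E)) := by
    rw [hS, Finset.insert_comm j l, Finset.insert_comm i l]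
  have hw_ne (s : ℝ) : σ * ∏ u ∈ S.erase s, (s - u) ≠ 0 :=
    mul_ne_zero (left_ne_zero_of_mul hσi.ne')
      (Finset.prod_ne_zero_iff.2 fun u hu => sub_ne_zero.2 (Finset.ne_of_mem_erase hu).symm)
  obtain ⟨φ', hφ'⟩ := exists_dual_pos_of_nonneg (φ := φ) (S := S) hindep (fun e _ => hw_ne e)
    (fun e he => by simp [hφE e he]) (fun s hs hsE => by
      simp only [hS, Finset.mem_insert] at hs
      obtain rfl | rfl | rfl | hs := hs
      · rw [hS, prod_erase_insert_insert_insert hij.ne hil.ne hjl.ne hi hj hl]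
        have := mul_pos hσi (mul_pos (sub_pos.2 hij) (sub_pos.2 hil))
        linarith
      · rw [hSj, prod_erase_insert_insert_insert hij.ne' hjl.ne hil.ne hj hi hl]
        have := mul_pos (neg_pos.2 hσj) (mul_pos (sub_pos.2 hij) (sub_pos.2 hjl))
        linarith
      · rw [hSl, prod_erase_insert_insert_insert hil.ne' hjl.ne' hij.ne hl hi hj]
        have := mul_pos hσl (mul_pos (sub_pos.2 hil) (sub_pos.2 hjl))
        linarith
      · exact absurd hs hsE)
  have hSI : (S : Set ℝ) ⊆ I := by
    have hjI : j ∈ I := Set.OrdConnected.out ‹_› hiI hlI ⟨hij.le, hjl.le⟩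
    simp [hS, Set.insert_subset_iff, hiI, hjI, hlI, hEI]
  have hcard : #S = d + 3 := by
    rw [hS, Finset.card_insert_of_notMem (by simp [hij.ne, hil.ne, hi]),
      Finset.card_insert_of_notMem (by simp [hjl.ne, hj]), Finset.card_insert_of_notMem hl, hE]
  have := hz.card_le_of_alternatesOn hF φ' hSI (σ := σ) fun s hs => by
    linarith [hφ' s hs]
  lia

end Flip

/-! ### Points in general position on a curve -/

section Generic

variable {V : Type*} [AddCommGroup V] [Module ℝ V] {F : ℝ → V} {I : Set ℝ} {k : ℕ}

/-- The points of `X` are in general position over those of `P`: adding points of `X` to an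
independent family from `P` keeps it independent as long as the dimension allows. -/
def GenericOver (F : ℝ → V) (P X : Finset ℝ) : Prop :=
  ∀ C ⊆ P, ∀ Y ⊆ X, #(C ∪ Y) ≤ Module.finrank ℝ V → LinearIndepOn ℝ F (C : Set ℝ) →
    LinearIndepOn ℝ F (↑(C ∪ Y) : Set ℝ)

theorem genericOver_empty (F : ℝ → V) (P : Finset ℝ) : GenericOver F P ∅ := by
  intro C _ Y hY _ hC
  rwa [Finset.subset_empty.1 hY, Finset.union_empty]

theorem GenericOver.insert_of_notMem_span {P X : Finset ℝ} (h : GenericOver F P X) {s : ℝ}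
    (hs : s ∉ P ∪ X)
    (hspan : ∀ Q ⊆ P ∪ X, #Q < Module.finrank ℝ V → F s ∉ Submodule.span ℝ (F '' (Q : Set ℝ))) :
    GenericOver F P (insert s X) := by
  intro C hC Y hY hcard hindep
  by_cases hsY : s ∈ Y
  · have hYX : Y.erase s ⊆ X := Finset.subset_insert_iff.1 hY
    have hQ : C ∪ Y.erase s ⊆ P ∪ X := Finset.union_subset_union hC hYX
    have hCY : C ∪ Y = insert s (C ∪ Y.erase s) := by
      rw [← Finset.union_insert, Finset.insert_erase hsY]
    rw [hCY, Finset.card_insert_of_notMem fun hsQ => hs (hQ hsQ)] at hcard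
    rw [hCY, Finset.coe_insert]
    exact (h C hC _ hYX (Nat.le_of_succ_le hcard) hindep).insert (hspan _ hQ hcard)
  · exact h C hC Y ((Finset.subset_insert_iff_of_notMem hsY).1 hY) hcard hindep

theorem GenericOver.mono {P P' X X' : Finset ℝ} (h : GenericOver F P X) (hP : P' ⊆ P)
    (hX : X' ⊆ X) : GenericOver F P' X' :=
  fun C hC Y hY => h C (hC.trans hP) Y (hY.trans hX)

theorem GenericOver.linearIndepOn {P X : Finset ℝ} (h : GenericOver F P X) {Q : Finset ℝ}
    (hQ : Q ⊆ P ∪ X) (hcard : #Q ≤ Module.finrank ℝ V)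
    (hP : LinearIndepOn ℝ F (P : Set ℝ)) : LinearIndepOn ℝ F (Q : Set ℝ) := by
  have hsplit : Q ∩ P ∪ Q \ P = Q := by
    rw [Finset.union_comm, Finset.sdiff_union_inter]
  have := h (Q ∩ P) Finset.inter_subset_right (Q \ P) (sdiff_le_iff.2 hQ)
    (hsplit.symm ▸ hcard) (hP.mono (by simp))
  rwa [hsplit] at this

theorem ZerosAtMost.finite_setOf_mem (hz : ZerosAtMost k I F) {W : Submodule ℝ V} (hW : W < ⊤) :
    {t | t ∈ I ∧ F t ∈ W}.Finite := by
  obtain ⟨φ, hφ, hWφ⟩ := Submodule.exists_le_ker_of_lt_top W hW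
  exact (Set.finite_of_encard_le_coe (hz φ hφ)).subset fun t ht => ⟨ht.1, hWφ ht.2⟩

theorem ZerosAtMost.exists_forall_notMem_span (hz : ZerosAtMost k I F) {u v : ℝ} (huv : u < v)
    (hI : Ioo u v ⊆ I) (P : Finset ℝ) :
    ∃ s ∈ Ioo u v, s ∉ P ∧
      ∀ Q ⊆ P, #Q < Module.finrank ℝ V → F s ∉ Submodule.span ℝ (F '' (Q : Set ℝ)) := by
  classical
  have hproper (Q : Finset ℝ) (hQ : #Q < Module.finrank ℝ V) :
      Submodule.span ℝ (F '' (Q : Set ℝ)) < ⊤ := by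
    refine Submodule.lt_top_of_finrank_lt_finrank (lt_of_le_of_lt ?_ hQ)
    rw [← Finset.coe_image]
    exact (finrank_span_finset_le_card _).trans Finset.card_image_le
  set bad : Set ℝ := ⋃ Q ∈ {Q ∈ P.powerset | #Q < Module.finrank ℝ V},
    {t | t ∈ I ∧ F t ∈ Submodule.span ℝ (F '' (Q : Set ℝ))} with hbad
  have hfin : bad.Finite := (Finset.finite_toSet _).biUnion fun Q hQ =>
    hz.finite_setOf_mem (hproper Q (Finset.mem_filter.1 hQ).2)
  obtain ⟨s, hs, hs'⟩ := (Ioo_infinite huv).exists_notMem_finite (hfin.union P.finite_toSet)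
  simp only [hbad, Set.mem_union, Set.mem_iUnion, Finset.mem_filter, Finset.mem_powerset,
    Set.mem_ofPred_eq, not_or, not_exists, not_and, Finset.mem_coe] at hs'
  exact ⟨s, hs, hs'.2, fun Q hQP hQ => hs'.1 Q ⟨hQP, hQ⟩ (hI hs)⟩

theorem ZerosAtMost.exists_genericOver (hz : ZerosAtMost k I F) {n : ℕ} {u v : Fin n → ℝ}
    (huv : ∀ i, u i < v i) (hI : ∀ i, Ioo (u i) (v i) ⊆ I) (P : Finset ℝ) :
    ∃ x : Fin n → ℝ, Function.Injective x ∧ (∀ i, x i ∈ Ioo (u i) (v i) ∧ x i ∉ P) ∧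
      GenericOver F P (Finset.univ.image x) := by
  induction n with
  | zero =>
    exact ⟨Fin.elim0, fun i => i.elim0, fun i => i.elim0, by simpa using genericOver_empty F P⟩
  | succ n ih =>
    obtain ⟨x, hinj, hx, hgen⟩ := ih (fun i => huv i.succ) fun i => hI i.succ
    obtain ⟨s, hs, hsPX, hspan⟩ :=
      hz.exists_forall_notMem_span (huv 0) (hI 0) (P ∪ Finset.univ.image x)
    have himage : Finset.univ.image (Fin.cons s x : Fin (n + 1) → ℝ) =
        insert s (Finset.univ.image x) := by
      ext y
      simp [Fin.exists_fin_succ, eq_comm]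
    refine ⟨Fin.cons s x, ?_, Fin.cases ⟨hs, ?_⟩ hx,
      himage ▸ hgen.insert_of_notMem_span hsPX hspan⟩
    · exact Fin.cons_injective_iff.2 ⟨by simp_all, hinj⟩
    · simp_all

theorem ZerosAtMost.exists_linearIndepOn_union (hz : ZerosAtMost k I F) {u v : ℝ} (huv : u < v)
    (hI : Ioo u v ⊆ I) (P : Finset ℝ) {Q : Finset ℝ} (hQ : LinearIndepOn ℝ F (Q : Set ℝ)) {n : ℕ}
    (hn : #Q + n ≤ Module.finrank ℝ V) :
    ∃ X : Finset ℝ, #X = n ∧ ↑X ⊆ Ioo u v ∧ Disjoint P X ∧ Disjoint Q X ∧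
      LinearIndepOn ℝ F (↑(Q ∪ X) : Set ℝ) := by
  obtain ⟨x, hinj, hx, hgen⟩ :=
    hz.exists_genericOver (n := n) (fun _ => huv) (fun _ => hI) (P ∪ Q)
  have hcard : #(Finset.univ.image x) = n := by
    rw [Finset.card_image_of_injective _ hinj, Finset.card_fin]
  have hdisj : Disjoint (P ∪ Q) (Finset.univ.image x) := by
    refine Finset.disjoint_right.2 fun y hy => ?_
    obtain ⟨i, -, rfl⟩ := Finset.mem_image.1 hy
    exact (hx i).2
  refine ⟨Finset.univ.image x, hcard, ?_, hdisj.mono_left Finset.subset_union_left,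
    hdisj.mono_left Finset.subset_union_right,
    hgen Q Finset.subset_union_right _ subset_rfl ((Finset.card_union_le _ _).trans ?_) hQ⟩
  · simpa [Set.range_subset_iff] using fun i => (hx i).1
  · rwa [hcard]

end Generic

/-! ### Intervals carrying both orientations -/

section Mixed

/-- Both orientations occur among the points of the curve `F` in `ℝⁿ` with parameters in
`(u, v)`. These are the intervals of which a `(d + 1)`-crossing curve has only boundedly many
consecutive ones. -/
def IsMixed {n : ℕ} (F : ℝ → Fin n → ℝ) (u v : ℝ) : Prop :=
  (∃ S : Finset ℝ, ↑S ⊆ Ioo u v ∧ #S = n ∧ 0 < orient F S) ∧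
    ∃ S : Finset ℝ, ↑S ⊆ Ioo u v ∧ #S = n ∧ orient F S < 0

section Basic

variable {n : ℕ} {F : ℝ → Fin n → ℝ} {u v : ℝ}

theorem IsMixed.mono {u' v' : ℝ} (h : IsMixed F u v) (hu : u' ≤ u) (hv : v ≤ v') :
    IsMixed F u' v' := by
  obtain ⟨⟨S, hS, hpos⟩, T, hT, hneg⟩ := h
  exact ⟨⟨S, hS.trans (Ioo_subset_Ioo hu hv), hpos⟩, T, hT.trans (Ioo_subset_Ioo hu hv), hneg⟩

theorem IsMixed.lt (h : IsMixed F u v) : u < v := by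
  obtain ⟨⟨S, hS, -, hpos⟩, T, hT, -, hneg⟩ := h
  by_contra huv
  rw [Ioo_eq_empty huv, Set.subset_empty_iff, Finset.coe_eq_empty] at hS hT
  exact lt_asymm hpos (by rwa [hS, ← hT])

open Filter Topology in
theorem IsMixed.exists_gt (h : IsMixed F u v) : ∃ u', u < u' ∧ IsMixed F u' v := by
  obtain ⟨⟨S, hS, hpos⟩, T, hT, hneg⟩ := h
  have hlt (U : Finset ℝ) (hU : ↑U ⊆ Ioo u v) : ∀ᶠ u' in 𝓝[>] u, ↑U ⊆ Ioo u' v :=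
    ((eventually_all_finset U).2 fun s hs =>
      (eventually_lt_nhds (hU hs).1).filter_mono nhdsWithin_le_nhds).mono
        fun u' hu' s hs => ⟨hu' s hs, (hU hs).2⟩
  obtain ⟨u', hu', hS', hT'⟩ :=
    (eventually_mem_nhdsWithin.and ((hlt S hS).and (hlt T hT))).exists
  exact ⟨u', hu', ⟨S, hS', hpos⟩, T, hT', hneg⟩

open Filter Topology in
theorem IsMixed.exists_lt (h : IsMixed F u v) : ∃ v', v' < v ∧ IsMixed F u v' := by
  obtain ⟨⟨S, hS, hpos⟩, T, hT, hneg⟩ := h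
  have hlt (U : Finset ℝ) (hU : ↑U ⊆ Ioo u v) : ∀ᶠ v' in 𝓝[<] v, ↑U ⊆ Ioo u v' :=
    ((eventually_all_finset U).2 fun s hs =>
      (eventually_gt_nhds (hU hs).2).filter_mono nhdsWithin_le_nhds).mono
        fun v' hv' s hs => ⟨(hU hs).1, hv' s hs⟩
  obtain ⟨v', hv', hS', hT'⟩ :=
    (eventually_mem_nhdsWithin.and ((hlt S hS).and (hlt T hT))).exists
  exact ⟨v', hv', ⟨S, hS', hpos⟩, T, hT', hneg⟩

end Basic

variable {d : ℕ} {F : ℝ → Fin (d + 1) → ℝ} {I : Set ℝ}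

/-- A point of `B` can be traded for one of `L` and for one of `R`; by the flip property the sign,
being the same for these two trades, is also that of the original set. -/
theorem orient_pos_of_outer [I.OrdConnected] (hF : ContinuousOn F I) (hz : ZerosAtMost (d + 1) I F)
    {L B R : Finset ℝ} (hL : #L = d + 1) (hR : #R = d + 1) (hI : ↑(L ∪ R ∪ B) ⊆ I)
    (hLB : ∀ i ∈ L, ∀ c ∈ B, i < c) (hBR : ∀ c ∈ B, ∀ l ∈ R, c < l)
    (hindep : ∀ Q ∈ (L ∪ R ∪ B).powersetCard (d + 1), LinearIndepOn ℝ F (Q : Set ℝ)) {σ : ℝ}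
    (hσ : ∀ Q ∈ (L ∪ R).powersetCard (d + 1), 0 < σ * orient F Q) :
    ∀ Q ∈ (L ∪ R ∪ B).powersetCard (d + 1), 0 < σ * orient F Q := by
  intro Q hQ
  induction hn : #(Q ∩ B) generalizing Q with
  | zero =>
    obtain ⟨hQsub, hQcard⟩ := Finset.mem_powersetCard.1 hQ
    have hdisj : Disjoint Q B := Finset.disjoint_iff_inter_eq_empty.2 (Finset.card_eq_zero.1 hn)
    exact hσ Q (Finset.mem_powersetCard.2
      ⟨hdisj.left_le_of_le_sup_right hQsub, hQcard⟩)
  | succ n ih =>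
    obtain ⟨hQsub, hQcard⟩ := Finset.mem_powersetCard.1 hQ
    obtain ⟨c, hc⟩ : (Q ∩ B).Nonempty := Finset.card_pos.1 (by lia)
    obtain ⟨hcQ, hcB⟩ := Finset.mem_inter.1 hc
    set E := Q.erase c with hEdef
    have hEcard : #E = d := by rw [Finset.card_erase_of_mem hcQ, hQcard, Nat.add_sub_cancel]
    have hEsub : E ⊆ L ∪ R ∪ B := (Q.erase_subset c).trans hQsub
    have hEindep : LinearIndepOn ℝ F (E : Set ℝ) :=
      (hindep Q hQ).mono (Finset.coe_subset.2 (Q.erase_subset c))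
    have htrade {x : ℝ} (hx : x ∈ L ∪ R) (hxE : x ∉ E) (hxB : x ∉ B) :
        0 < σ * orient F (insert x E) := by
      refine ih _ (Finset.mem_powersetCard.2 ⟨Finset.insert_subset
        (Finset.mem_union_left B hx) hEsub, ?_⟩) ?_
      · rw [Finset.card_insert_of_notMem hxE, hEcard]
      · rw [Finset.insert_inter_of_notMem hxB, hEdef, Finset.erase_inter,
          Finset.card_erase_of_mem hc, hn, Nat.add_sub_cancel]
    obtain ⟨i, hiL, hiE⟩ := Finset.exists_mem_notMem_of_card_lt_card (show #E < #L by lia)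
    obtain ⟨l, hlR, hlE⟩ := Finset.exists_mem_notMem_of_card_lt_card (show #E < #R by lia)
    have hiLR : i ∈ L ∪ R := Finset.mem_union_left R hiL
    have hlLR : l ∈ L ∪ R := Finset.mem_union_right L hlR
    have hσi := htrade hiLR hiE fun hiB => (hLB i hiL i hiB).false
    have hσl := htrade hlLR hlE fun hlB => (hBR l hlB l hlR).false
    have hnonneg := orient_insert_nonneg_of_between hF hz hEcard
      ((Finset.coe_subset.2 hEsub).trans hI) hEindep (hLB i hiL c hcB) (hBR c hcB l hlR)
      (hI (Finset.mem_union_left B hiLR)) (hI (Finset.mem_union_left B hlLR)) hiE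
      (Q.notMem_erase c) hlE hσi hσl
    rw [Finset.insert_erase hcQ] at hnonneg
    exact hnonneg.lt_of_ne' (mul_ne_zero (left_ne_zero_of_mul hσi.ne')
      ((orient_ne_zero_iff F hQcard).2 (hindep Q hQ)))

theorem orient_pos_of_genericOver [I.OrdConnected] (hF : ContinuousOn F I)
    (hz : ZerosAtMost (d + 1) I F) {T B : Finset ℝ} (hTI : ↑T ⊆ I) (hgen : GenericOver F B T)
    {σ : ℝ} (hσ : ∀ Q ∈ T.powersetCard (d + 1), 0 < σ * orient F Q) {u v m : ℝ}
    (hm : #{y ∈ T | y < m} = d + 1 ∧ #{y ∈ T | m < y} = d + 1) (hu : ∀ y ∈ T, y < m → y ≤ u)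
    (hv : ∀ y ∈ T, m < y → v ≤ y) (hB : ↑B ⊆ I ∩ Ioo u v) (hBcard : #B = d + 1)
    (hBindep : LinearIndepOn ℝ F (B : Set ℝ)) : 0 < σ * orient F B := by
  have hLR : {y ∈ T | y < m} ∪ {y ∈ T | m < y} ⊆ T :=
    Finset.union_subset (Finset.filter_subset _ T) (Finset.filter_subset _ T)
  refine orient_pos_of_outer hF hz hm.1 hm.2 ?_ (fun y hy c hc => ?_) (fun c hc y hy => ?_)
    (fun Q hQ => ?_) (fun Q hQ => hσ Q (Finset.powersetCard_mono hLR hQ)) B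
    (Finset.mem_powersetCard.2 ⟨Finset.subset_union_right, hBcard⟩)
  · rw [Finset.coe_union]
    exact Set.union_subset ((Finset.coe_subset.2 hLR).trans hTI) fun c hc => (hB hc).1
  · obtain ⟨hyT, hym⟩ := Finset.mem_filter.1 hy
    exact (hu y hyT hym).trans_lt (hB hc).2.1
  · obtain ⟨hyT, hmy⟩ := Finset.mem_filter.1 hy
    exact (hB hc).2.2.trans_le (hv y hyT hmy)
  · obtain ⟨hQsub, hQcard⟩ := Finset.mem_powersetCard.1 hQ
    exact (hgen.mono subset_rfl hLR).linearIndepOn (by rwa [Finset.union_comm])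
      (by simp [hQcard]) hBindep

theorem exists_card_filter_lt_eq {α : Type*} [LinearOrder α] {T : Finset α} {k l : ℕ}
    (hT : #T = k + 1 + l) : ∃ m ∈ T, #{x ∈ T | x < m} = k ∧ #{x ∈ T | m < x} = l := by
  set f := T.orderEmbOfFin hT
  set i : Fin (k + 1 + l) := ⟨k, by lia⟩
  have himage : Finset.univ.map f.toEmbedding = T := by
    rw [Finset.map_eq_image]
    exact T.image_orderEmbOfFin_univ hT
  refine ⟨f i, T.orderEmbOfFin_mem hT i, ?_, ?_⟩
  · rw [← himage, Finset.filter_map, Finset.card_map]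
    simp [Finset.filter_gt_eq_Iio, i]
  · rw [← himage, Finset.filter_map, Finset.card_map]
    simp [Finset.filter_lt_eq_Ioi, i]

theorem RamseyArrow.exists_orient_pos {n N m : ℕ} {F : ℝ → Fin n → ℝ}
    (hN : RamseyArrow ℝ N n m m) {X : Finset ℝ} (hX : N ≤ #X)
    (hindep : ∀ Q ∈ X.powersetCard n, LinearIndepOn ℝ F (Q : Set ℝ)) :
    ∃ T ⊆ X, #T = m ∧ ∃ σ ≠ 0, ∀ Q ∈ T.powersetCard n, 0 < σ * orient F Q := by
  obtain ⟨T, hTX, hT, hpos⟩ | ⟨T, hTX, hT, hneg⟩ := hN X hX fun Q => 0 < orient F Q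
  · exact ⟨T, hTX, hT, 1, one_ne_zero, by simpa using hpos⟩
  · refine ⟨T, hTX, hT, -1, by norm_num, fun Q hQ => ?_⟩
    have hne := (orient_ne_zero_iff F (Finset.mem_powersetCard.1 hQ).2).2
      (hindep Q (Finset.powersetCard_mono hTX hQ))
    have hlt := lt_of_le_of_ne (not_lt.1 (hneg Q hQ)) hne
    linarith

theorem exists_genericOver_of_isMixed {n N k : ℕ} {F : ℝ → Fin n → ℝ} {u v : Fin N → ℝ}
    (hz : ZerosAtMost k I F) (hI : ∀ i, Ioo (u i) (v i) ⊆ I) (h : ∀ i, IsMixed F (u i) (v i)) :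
    ∃ (P : Finset ℝ) (x : Fin N → ℝ), (∀ i, x i ∈ Ioo (u i) (v i)) ∧
      GenericOver F P (Finset.univ.image x) ∧ ∀ i, ∀ σ ≠ 0, ∃ B ⊆ P, ↑B ⊆ Ioo (u i) (v i) ∧
        #B = n ∧ σ * orient F B < 0 := by
  choose S hS hScard hpos using fun i => (h i).1
  choose T hT hTcard hneg using fun i => (h i).2
  set P := Finset.univ.biUnion fun i => S i ∪ T i
  have hP (i : Fin N) : S i ∪ T i ⊆ P :=
    Finset.subset_biUnion_of_mem (fun i => S i ∪ T i) (Finset.mem_univ i)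
  obtain ⟨x, -, hx, hgen⟩ := hz.exists_genericOver (fun i => (h i).lt) hI P
  refine ⟨P, x, fun i => (hx i).1, hgen, fun i σ hσ => ?_⟩
  obtain hσ | hσ := hσ.lt_or_gt
  · exact ⟨S i, Finset.subset_union_left.trans (hP i), hS i, hScard i,
      mul_neg_of_neg_of_pos hσ (hpos i)⟩
  · exact ⟨T i, Finset.subset_union_right.trans (hP i), hT i, hTcard i,
      mul_neg_of_pos_of_neg hσ (hneg i)⟩

theorem RamseyArrow.length_lt_of_isMixed {N : ℕ}
    (hN : RamseyArrow ℝ N (d + 1) (d + 1 + 1 + (d + 1)) (d + 1 + 1 + (d + 1))) {a b : ℝ}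
    (hF : ContinuousOn F (Icc a b)) (hz : ZerosAtMost (d + 1) (Icc a b) F)
    (p : RelSeries (subdivisionRel a b (IsMixed F))) : p.length < N := by
  by_contra! hlen
  have hmono := monotone_of_subdivisionRel p
  have hI (i : Fin p.length) : Ioo (p i.castSucc) (p i.succ) ⊆ Icc a b :=
    Ioo_subset_Icc_self.trans (Icc_subset_Icc (p.step i).1 (p.step i).2.2.1)
  obtain ⟨P, x, hx, hgen, hwitness⟩ :=
    exists_genericOver_of_isMixed hz hI fun i => (p.step i).2.2.2
  have hsep {i j : Fin p.length} (hij : i < j) : p i.succ ≤ p j.castSucc :=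
    hmono (Fin.succ_le_castSucc_iff.2 hij)
  have hx_mono : StrictMono x := fun i j hij => ((hx i).2.trans_le (hsep hij)).trans (hx j).1
  obtain ⟨T, hTX, hT, σ, hσ, hpos⟩ := hN.exists_orient_pos (F := F) (X := Finset.univ.image x)
    (by rwa [Finset.card_image_of_injective _ hx_mono.injective, Finset.card_fin]) fun Q hQ => by
      obtain ⟨hQX, hQcard⟩ := Finset.mem_powersetCard.1 hQ
      exact (hgen.mono (Finset.empty_subset P) hQX).linearIndepOn (by simp)
        (by simp [hQcard]) (by simp)
  obtain ⟨m, hmT, hm⟩ := exists_card_filter_lt_eq hT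
  obtain ⟨i, -, rfl⟩ := Finset.mem_image.1 (hTX hmT)
  obtain ⟨B, hBP, hBi, hBcard, hBneg⟩ := hwitness i σ hσ
  have hmem {y : ℝ} (hy : y ∈ T) : ∃ j, x j = y := by simpa using hTX hy
  have hBpos : 0 < σ * orient F B := by
    refine orient_pos_of_genericOver hF hz (fun y hy => ?_) (hgen.mono hBP hTX) hpos hm
      (fun y hy hyi => ?_) (fun y hy hiy => ?_) (fun c hc => ⟨hI i (hBi hc), hBi hc⟩) hBcard
      ((orient_ne_zero_iff F hBcard).1 (right_ne_zero_of_mul hBneg.ne))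
    all_goals obtain ⟨j, rfl⟩ := hmem hy
    · exact hI j (hx j)
    · exact (hx j).2.le.trans (hsep (hx_mono.lt_iff_lt.1 hyi))
    · exact (hsep (hx_mono.lt_iff_lt.1 hiy)).trans (hx j).1.le
  exact hBpos.not_gt hBneg

end Mixed

/-! ### Intervals carrying one orientation -/

section OneSign

theorem exists_forall_orient_nonneg {n : ℕ} {F : ℝ → Fin n → ℝ} {u v : ℝ} (h : ¬ IsMixed F u v) :
    ∃ σ ≠ 0, ∀ S : Finset ℝ, ↑S ⊆ Ioo u v → #S = n → 0 ≤ σ * orient F S := by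
  obtain h | h := not_and_or.1 h <;> push Not at h
  · exact ⟨-1, by norm_num, fun S hS hcard => by linarith [h S hS hcard]⟩
  · exact ⟨1, one_ne_zero, fun S hS hcard => by linarith [h S hS hcard]⟩

theorem orient_nonneg_of_subset_closure {n : ℕ} {F : ℝ → Fin n → ℝ} {A : Set ℝ}
    (hF : ContinuousOn F (closure A)) {σ : ℝ}
    (h : ∀ S : Finset ℝ, ↑S ⊆ A → #S = n → 0 ≤ σ * orient F S) {S : Finset ℝ}
    (hS : ↑S ⊆ closure A) (hcard : #S = n) : 0 ≤ σ * orient F S := by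
  let D (t : Fin n → ℝ) : ℝ :=
    σ * ((Matrix.of fun i => F (t i)).det * (Matrix.vandermonde t).det)
  have hclosure : closure (Set.univ.pi fun _ : Fin n => A) = Set.univ.pi fun _ => closure A :=
    closure_pi_set _ _
  have hD_cont : ContinuousOn D (closure (Set.univ.pi fun _ => A)) := by
    have hcomp (i : Fin n) : ContinuousOn (fun t : Fin n → ℝ => F (t i))
        (closure (Set.univ.pi fun _ => A)) :=
      hF.comp (continuous_apply i).continuousOn fun t ht => by
        rw [hclosure] at ht
        exact ht i trivial
    have hdet : ContinuousOn (fun t : Fin n → ℝ => (Matrix.of fun i => F (t i)).det)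
        (closure (Set.univ.pi fun _ => A)) :=
      continuous_id.matrix_det.comp_continuousOn (continuousOn_pi.2 hcomp)
    have hvandermonde : Continuous fun t : Fin n → ℝ => (Matrix.vandermonde t).det := by
      simp only [Matrix.det_vandermonde]
      fun_prop
    exact continuousOn_const.mul (hdet.mul hvandermonde.continuousOn)
  have hD_nonneg (t : Fin n → ℝ) (ht : t ∈ Set.univ.pi fun _ : Fin n => A) : 0 ≤ D t := by
    by_cases hinj : Function.Injective t
    · have hD : D t = σ * orient F (Finset.univ.image t) := by rw [orient_image F hinj]
      rw [hD]
      refine h _ ?_ (by rw [Finset.card_image_of_injective _ hinj, Finset.card_fin])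
      simpa [Set.range_subset_iff] using ht
    · rw [← Matrix.det_vandermonde_ne_zero_iff, not_not] at hinj
      simp [D, hinj]
  obtain ⟨t, ht, rfl⟩ := exists_injective_image_eq hcard
  rw [orient_image F ht]
  refine le_on_closure hD_nonneg continuousOn_const hD_cont ?_
  rw [hclosure]
  exact fun i _ => hS (by simp)

variable {d k : ℕ} {F : ℝ → Fin (d + 1) → ℝ} {I : Set ℝ} {σ : ℝ}

theorem coeff_mul_prod_nonneg {E : Finset ℝ} (hE : #E = d) {s t c : ℝ} (hs : s ∉ E) (ht : t ∉ E)
    {y : Fin (d + 1) → ℝ} (hy : y ∈ Submodule.span ℝ (F '' (E : Set ℝ)))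
    (hst : F s = c • F t + y) (hindep : LinearIndepOn ℝ F (↑(insert t E) : Set ℝ)) (hσ : σ ≠ 0)
    (hσs : 0 ≤ σ * orient F (insert s E)) (hσt : 0 ≤ σ * orient F (insert t E)) :
    0 ≤ c * ((∏ e ∈ E, (s - e)) * ∏ e ∈ E, (t - e)) := by
  obtain ⟨φ, hφE, hφ⟩ := exists_orient_insert_eq F hE
  have hφy : φ y = 0 := by
    have hle : Submodule.span ℝ (F '' (E : Set ℝ)) ≤ LinearMap.ker φ :=
      Submodule.span_le.2 (Set.image_subset_iff.2 hφE)
    exact hle hy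
  have hcard : #(insert t E) = d + 1 := by rw [Finset.card_insert_of_notMem ht, hE]
  have hφt : φ (F t) ≠ 0 := by
    have hne := (orient_ne_zero_iff F hcard).2 hindep
    rw [hφ t ht] at hne
    exact left_ne_zero_of_mul hne
  have hmul := mul_nonneg hσs hσt
  have hsq : 0 < (σ * φ (F t)) ^ 2 := by positivity
  rw [hφ s hs, hφ t ht, hst, map_add, map_smul, hφy, add_zero, smul_eq_mul] at hmul
  refine nonneg_of_mul_nonneg_right (hmul.trans_eq ?_) hsq
  ring

theorem sub_mul_sub_neg_of_mem_uIoo {R : Type*} [CommRing R] [LinearOrder R]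
    [IsStrictOrderedRing R] {s t g : R} (hg : g ∈ Set.uIoo s t) :
    (s - g) * (t - g) < 0 := by
  obtain hst | hst := le_total s t
  · rw [Set.uIoo_of_le hst] at hg
    exact mul_neg_of_neg_of_pos (sub_neg.2 hg.1) (sub_pos.2 hg.2)
  · rw [Set.uIoo_of_ge hst] at hg
    exact mul_neg_of_pos_of_neg (sub_pos.2 hg.2) (sub_neg.2 hg.1)

section Interval

variable (hz : ZerosAtMost k I F) (hσ : σ ≠ 0)
  (hnonneg : ∀ S : Finset ℝ, ↑S ⊆ I → #S = d + 1 → 0 ≤ σ * orient F S)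
include hz hσ hnonneg

theorem exists_mem_Ioo_coeff_mul_prod_nonneg {u v : ℝ} (huv : u < v) (huvI : Ioo u v ⊆ I)
    {s t : ℝ} (hs : s ∈ I) (ht : t ∈ I) {Q : Finset ℝ} (hQI : ↑Q ⊆ I) (hsQ : s ∉ Q) (htQ : t ∉ Q)
    (hQ : #Q + 1 = d) (hindep : LinearIndepOn ℝ F (↑(insert t Q) : Set ℝ)) {c : ℝ}
    {y : Fin (d + 1) → ℝ} (hy : y ∈ Submodule.span ℝ (F '' (Q : Set ℝ)))
    (hst : F s = c • F t + y) :
    ∃ g ∈ Ioo u v, 0 ≤ c * ((∏ e ∈ Q, (s - e)) * ∏ e ∈ Q, (t - e)) * ((s - g) * (t - g)) := by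
  obtain ⟨G, hG, hGuv, hsG, hQG, hindepG⟩ := hz.exists_linearIndepOn_union huv huvI {s} hindep
    (n := 1) (by rw [Finset.card_insert_of_notMem htQ, Module.finrank_fin_fun, hQ])
  obtain ⟨g, rfl⟩ := Finset.card_eq_one.1 hG
  have hg : g ∈ Ioo u v := by simpa using hGuv
  have hsg : s ≠ g := by simpa using hsG
  obtain ⟨htg, hgQ⟩ : t ≠ g ∧ g ∉ Q := by simpa [eq_comm] using hQG
  have hE : #(insert g Q) = d := by rw [Finset.card_insert_of_notMem hgQ, hQ]
  have hyE : y ∈ Submodule.span ℝ (F '' (↑(insert g Q) : Set ℝ)) :=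
    Submodule.span_mono (Set.image_mono (Finset.coe_subset.2 (Finset.subset_insert g Q))) hy
  have hsE : s ∉ insert g Q := by simp [hsg, hsQ]
  have htE : t ∉ insert g Q := by simp [htg, htQ]
  have hinsert {x : ℝ} (hx : x ∈ I) (hxE : x ∉ insert g Q) :
      0 ≤ σ * orient F (insert x (insert g Q)) := by
    refine hnonneg _ ?_ (by rw [Finset.card_insert_of_notMem hxE, hE])
    simp [Set.insert_subset_iff, hx, huvI hg, hQI]
  have hindepE : LinearIndepOn ℝ F (↑(insert t (insert g Q)) : Set ℝ) := by
    rwa [Finset.union_comm, ← Finset.insert_eq, Finset.insert_comm] at hindepG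
  have hprod :=
    coeff_mul_prod_nonneg hE hsE htE hyE hst hindepE hσ (hinsert hs hsE) (hinsert ht htE)
  rw [Finset.prod_insert hgQ, Finset.prod_insert hgQ] at hprod
  exact ⟨g, hg, by linarith⟩

variable [I.OrdConnected]

/-- The signs given by `exists_mem_Ioo_coeff_mul_prod_nonneg` for the interval between `s` and `t`
and for an interval outside are opposite. -/
theorem smul_add_ne_of_orient_nonneg {u v : ℝ} (huv : u < v) (huvI : Ioo u v ⊆ I) {s t : ℝ}
    (hs : s ∈ I) (ht : t ∈ I) (hst : s ≠ t) (hout : ∀ g ∈ Ioo u v, 0 < (s - g) * (t - g))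
    {Q : Finset ℝ} (hQI : ↑Q ⊆ I) (hsQ : s ∉ Q) (htQ : t ∉ Q) (hQ : #Q + 1 = d)
    (hindep : LinearIndepOn ℝ F (↑(insert t Q) : Set ℝ)) {c : ℝ} (hc : c ≠ 0)
    {y : Fin (d + 1) → ℝ} (hy : y ∈ Submodule.span ℝ (F '' (Q : Set ℝ))) :
    F s ≠ c • F t + y := by
  intro hFs
  have hprod_ne {x : ℝ} (hx : x ∉ Q) : ∏ e ∈ Q, (x - e) ≠ 0 :=
    Finset.prod_ne_zero_iff.2 fun e he => sub_ne_zero.2 (ne_of_mem_of_not_mem he hx).symm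
  have hbetween : Ioo (s ⊓ t) (s ⊔ t) ⊆ I :=
    Ioo_subset_Icc_self.trans (Set.OrdConnected.uIcc_subset ‹_› hs ht)
  obtain ⟨g, hg, hpos⟩ := exists_mem_Ioo_coeff_mul_prod_nonneg hz hσ hnonneg huv huvI hs ht hQI
    hsQ htQ hQ hindep hy hFs
  obtain ⟨g', hg', hneg⟩ := exists_mem_Ioo_coeff_mul_prod_nonneg hz hσ hnonneg (inf_lt_sup.2 hst)
    hbetween hs ht hQI hsQ htQ hQ hindep hy hFs
  exact mul_ne_zero hc (mul_ne_zero (hprod_ne hsQ) (hprod_ne htQ))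
    (le_antisymm (nonpos_of_mul_nonneg_left hneg (sub_mul_sub_neg_of_mem_uIoo hg'))
      (nonneg_of_mul_nonneg_left hpos (hout g hg)))

theorem notMem_span_insert_of_orient_nonneg {u v : ℝ} (huv : u < v) (huvI : Ioo u v ⊆ I)
    {s t : ℝ} (hs : s ∈ I) (ht : t ∈ I) (hst : s ≠ t)
    (hout : ∀ g ∈ Ioo u v, 0 < (s - g) * (t - g)) {R : Finset ℝ} (hRI : ↑R ⊆ I) (hsR : s ∉ R)
    (htR : t ∉ R) (hR : #R + 1 ≤ d) (hindep : LinearIndepOn ℝ F (↑(insert t R) : Set ℝ))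
    (hspan : F s ∉ Submodule.span ℝ (F '' (R : Set ℝ))) :
    F s ∉ Submodule.span ℝ (F '' (↑(insert t R) : Set ℝ)) := by
  intro hmem
  rw [Finset.coe_insert, Set.image_insert_eq, Submodule.mem_span_insert] at hmem
  obtain ⟨c, y, hy, hFs⟩ := hmem
  have hc : c ≠ 0 := by
    rintro rfl
    exact hspan (by simpa [hFs] using hy)
  have hcard : #(insert t R) + (d - (#R + 1)) = d := by
    rw [Finset.card_insert_of_notMem htR]
    lia
  obtain ⟨X, hX, hXuv, hsX, hRX, hindepX⟩ := hz.exists_linearIndepOn_union huv huvI {s} hindep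
    (by rw [hcard, Module.finrank_fin_fun]; exact Nat.le_succ d)
  rw [Finset.disjoint_insert_left] at hRX
  rw [Finset.insert_union] at hindepX
  have hRXI : ↑(R ∪ X) ⊆ I := by simpa using ⟨hRI, hXuv.trans huvI⟩
  have hRXcard : #(R ∪ X) + 1 = d := by
    rw [Finset.card_union_of_disjoint hRX.2]
    lia
  have hyX : y ∈ Submodule.span ℝ (F '' (↑(R ∪ X) : Set ℝ)) :=
    Submodule.span_mono (Set.image_mono (Finset.coe_subset.2 Finset.subset_union_left)) hy
  exact smul_add_ne_of_orient_nonneg hz hσ hnonneg huv huvI hs ht hst hout hRXI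
    (by simp_all) (by simp [htR, hRX.1]) hRXcard hindepX hc hyX hFs

theorem linearIndepOn_of_orient_nonneg {u v : ℝ} (huv : u < v) (huvI : Ioo u v ⊆ I) {A : Set ℝ}
    (hAI : A ⊆ I) (hout : ∀ s ∈ A, ∀ t ∈ A, ∀ g ∈ Ioo u v, 0 < (s - g) * (t - g))
    (hF0 : ∀ t ∈ A, F t ≠ 0) {T : Finset ℝ} (hTA : ↑T ⊆ A) (hT : #T ≤ d + 1) :
    LinearIndepOn ℝ F (T : Set ℝ) := by
  induction hn : #T generalizing T with
  | zero => simp [Finset.card_eq_zero.1 hn]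
  | succ n ih =>
    obtain ⟨s, T, hsT, rfl, hTn⟩ := Finset.card_eq_succ.1 hn
    rw [hn] at hT
    rw [Finset.coe_insert, Set.insert_subset_iff] at hTA
    have hTindep := ih hTA.2 (by lia) hTn
    rw [Finset.coe_insert]
    refine hTindep.insert ?_
    obtain rfl | ⟨t, ht⟩ := T.eq_empty_or_nonempty
    · simpa using hF0 s hTA.1
    set R := T.erase t with hR
    have hTR : insert t R = T := Finset.insert_erase ht
    have htR : t ∉ R := Finset.notMem_erase t T
    have hRcard : #R + 1 = n := by rw [← hTn, ← hTR, Finset.card_insert_of_notMem htR]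
    have hRA : ↑R ⊆ A := (Finset.coe_subset.2 (T.erase_subset t)).trans hTA.2
    have hsR : s ∉ R := fun h => hsT (Finset.mem_of_mem_erase h)
    have hsR_indep : LinearIndepOn ℝ F (↑(insert s R) : Set ℝ) :=
      ih (by simpa [Set.insert_subset_iff] using ⟨hTA.1, hRA⟩)
        (by rw [Finset.card_insert_of_notMem hsR]; lia)
        (by rw [Finset.card_insert_of_notMem hsR, hRcard])
    rw [← hTR] at hTindep ⊢
    refine notMem_span_insert_of_orient_nonneg hz hσ hnonneg huv huvI (hAI hTA.1)
      (hAI (hTA.2 ht)) (ne_of_mem_of_not_mem ht hsT).symm (hout s hTA.1 t (hTA.2 ht))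
      (hRA.trans hAI) hsR htR (by lia) hTindep ?_
    rw [Finset.coe_insert] at hsR_indep
    exact ((linearIndepOn_insert (by simpa using hsR)).1 hsR_indep).2

end Interval

theorem zerosAtMost_of_linearIndepOn {V : Type*} [AddCommGroup V] [Module ℝ V]
    [FiniteDimensional ℝ V] {F : ℝ → V} {A : Set ℝ} {d : ℕ} (hd : Module.finrank ℝ V = d + 1)
    (h : ∀ T : Finset ℝ, ↑T ⊆ A → #T ≤ d + 1 → LinearIndepOn ℝ F (T : Set ℝ)) :
    ZerosAtMost d A F := by
  intro φ hφ
  by_contra! hlt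
  obtain ⟨T, hT, hTcard⟩ := Set.exists_subset_encard_eq (Order.add_one_le_of_lt hlt)
  have hTfin : T.Finite := Set.finite_of_encard_eq_coe (k := d + 1) (by simpa using hTcard)
  obtain ⟨T, rfl⟩ := hTfin.exists_finset_coe
  replace hTcard : #T = d + 1 := by
    rw [Set.encard_coe_eq_coe_finsetCard] at hTcard
    exact_mod_cast hTcard
  have hspan := (h T (fun t ht => (hT ht).1) hTcard.le).span_eq_top_of_card_eq_finrank'
    (by simp [hd, hTcard])
  exact hφ (LinearMap.ext_on_range hspan fun t => (hT t.2).2)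

end OneSign

/-! ### Subdivision into convex pieces -/

section Main

variable {d k : ℕ} {F : ℝ → Fin (d + 1) → ℝ}

theorem ZerosAtMost.mono {V : Type*} [AddCommGroup V] [Module ℝ V] {F : ℝ → V} {I J : Set ℝ}
    (h : ZerosAtMost k J F) (hIJ : I ⊆ J) : ZerosAtMost k I F :=
  fun φ hφ => (h φ hφ).trans' (Set.encard_le_encard fun _ ht => ⟨hIJ ht.1, ht.2⟩)

/-- The generic points that `linearIndepOn_of_orient_nonneg` needs outside one half of the interval
are found in the other half. -/
theorem exists_zerosAtMost_of_not_isMixed {u v : ℝ} (huv : u ≤ v) (hF : ContinuousOn F (Icc u v))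
    (hF0 : ∀ t ∈ Icc u v, F t ≠ 0) (hz : ZerosAtMost k (Icc u v) F) (h : ¬ IsMixed F u v) :
    ∃ m ∈ Icc u v, ZerosAtMost d (Icc u m) F ∧ ZerosAtMost d (Icc m v) F := by
  have hfin : Module.finrank ℝ (Fin (d + 1) → ℝ) = d + 1 := Module.finrank_fin_fun ℝ
  obtain rfl | huv := huv.eq_or_lt
  · have hz0 : ZerosAtMost d (Icc u u) F := zerosAtMost_of_linearIndepOn hfin fun T hT _ =>
      ((linearIndepOn_singleton_iff ℝ).2 (hF0 u (by simp))).mono (by simpa using hT)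
    exact ⟨u, by simp, hz0, hz0⟩
  obtain ⟨σ, hσ, hnonneg⟩ := exists_forall_orient_nonneg h
  have hclosure : closure (Ioo u v) = Icc u v := closure_Ioo huv.ne
  have hnonneg' (S : Finset ℝ) (hS : ↑S ⊆ Icc u v) (hcard : #S = d + 1) : 0 ≤ σ * orient F S :=
    orient_nonneg_of_subset_closure (hclosure.symm ▸ hF) hnonneg (hclosure.symm ▸ hS) hcard
  have hhalf {A : Set ℝ} {x y : ℝ} (hxy : x < y) (hxyI : Ioo x y ⊆ Icc u v) (hA : A ⊆ Icc u v)
      (hout : ∀ s ∈ A, ∀ t ∈ A, ∀ g ∈ Ioo x y, 0 < (s - g) * (t - g)) : ZerosAtMost d A F :=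
    zerosAtMost_of_linearIndepOn hfin fun T hTA hT => linearIndepOn_of_orient_nonneg hz hσ
      hnonneg' hxy hxyI hA hout (fun t ht => hF0 t (hA ht)) hTA hT
  obtain ⟨m, hum, hmv⟩ := exists_between huv
  refine ⟨m, ⟨hum.le, hmv.le⟩, hhalf hmv ?_ ?_ fun s hs t ht g hg => ?_,
    hhalf hum ?_ ?_ fun s hs t ht g hg => ?_⟩
  · exact Ioo_subset_Icc_self.trans (Icc_subset_Icc_left hum.le)
  · exact Icc_subset_Icc_right hmv.le
  · exact mul_pos_of_neg_of_neg (sub_neg.2 (hs.2.trans_lt hg.1)) (sub_neg.2 (ht.2.trans_lt hg.1))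
  · exact Ioo_subset_Icc_self.trans (Icc_subset_Icc_right hmv.le)
  · exact Icc_subset_Icc_left hum.le
  · exact mul_pos (sub_pos.2 (hg.2.trans_le hs.1)) (sub_pos.2 (hg.2.trans_le ht.1))

theorem exists_subdivision_zerosAtMost (d : ℕ) :
    ∃ M : ℕ, ∀ a b : ℝ, a ≤ b → ∀ F : ℝ → Fin (d + 1) → ℝ, ContinuousOn F (Icc a b) →
      (∀ t ∈ Icc a b, F t ≠ 0) → ZerosAtMost (d + 1) (Icc a b) F →
      ∃ k : ℕ, k ≤ M ∧ ∃ t : Fin (k + 1) → ℝ, t 0 = a ∧ t (Fin.last k) = b ∧ Monotone t ∧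
        ∀ j : Fin k, ZerosAtMost d (Icc (t j.castSucc) (t j.succ)) F := by
  obtain ⟨N, hN⟩ := exists_ramseyArrow ℝ (d + 1) (d + 1 + 1 + (d + 1)) (d + 1 + 1 + (d + 1))
  refine ⟨2 * N, fun a b hab F hF hF0 hz => ?_⟩
  obtain ⟨p, hlen, -⟩ | ⟨p, hlen, hhead, hlast⟩ := exists_relSeries_bad_or_good (B := IsMixed F)
    (fun _ _ _ _ h => h.mono) (fun _ h => h.lt.false) (fun _ _ h => h.exists_gt)
    (fun _ _ h => h.exists_lt) N le_rfl hab
  · exact absurd hlen (hN.length_lt_of_isMixed hF hz p).ne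
  have hbisect (u v : ℝ) (huv : (u, v) ∈ subdivisionRel a b fun u v => ¬ IsMixed F u v) :
      ∃ m, (u, m) ∈ subdivisionRel a b (fun u v => ZerosAtMost d (Icc u v) F) ∧
        (m, v) ∈ subdivisionRel a b fun u v => ZerosAtMost d (Icc u v) F := by
    obtain ⟨hau, huv, hvb, hmixed⟩ := huv
    have hI : Icc u v ⊆ Icc a b := Icc_subset_Icc hau hvb
    obtain ⟨m, ⟨hum, hmv⟩, hzu, hzv⟩ := exists_zerosAtMost_of_not_isMixed huv (hF.mono hI)
      (fun t ht => hF0 t (hI ht)) (hz.mono hI) hmixed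
    exact ⟨m, ⟨hau, hum, hmv.trans hvb, hzu⟩, hau.trans hum, hmv, hvb, hzv⟩
  obtain ⟨q, hqlen, hqhead, hqlast⟩ := exists_relSeries_bisection hbisect p
  exact ⟨q.length, by lia, q.toFun, hqhead.trans hhead, hqlast.trans hlast,
    monotone_of_subdivisionRel q, fun j => (q.step j).2.2.2⟩

/-- The homogeneous coordinates `(1, γ t)`, which turn the affine hyperplanes of `ℝᵈ` into linear
ones. -/
def homogenize {d : ℕ} (γ : ℝ → Fin d → ℝ) (t : ℝ) : Fin (d + 1) → ℝ :=
  Fin.cons 1 (γ t)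

theorem curveCrossing_iff_zerosAtMost {I : Set ℝ} {γ : ℝ → Fin d → ℝ} :
    CurveCrossing k I γ ↔ ZerosAtMost k I (homogenize γ) := by
  have hdual (c : ℝ) (u : Fin d → ℝ) (t : ℝ) :
      dotProductEquiv ℝ (Fin (d + 1)) (Fin.cons c u) (homogenize γ t) = c + ∑ i, u i * γ t i := by
    simp [homogenize, dotProduct, Fin.sum_univ_succ]
  constructor
  · intro h φ hφ
    obtain ⟨w, rfl⟩ := (dotProductEquiv ℝ (Fin (d + 1))).surjective φ
    obtain ⟨c, u, rfl⟩ : ∃ c u, w = Fin.cons c u := ⟨_, _, (Fin.cons_self_tail w).symm⟩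
    simp only [hdual]
    by_cases hu : u = 0
    · have hc : c ≠ 0 := by
        rintro rfl
        rw [hu, (dotProductEquiv ℝ _).map_ne_zero_iff] at hφ
        exact hφ (Fin.cons_self_tail 0)
      simp [hu, hc]
    · exact (h {x | ∑ i, u i * x i = -c} ⟨u, -c, hu, rfl⟩).trans'
        (Set.encard_le_encard fun t ht => ⟨ht.1, eq_neg_of_add_eq_zero_right ht.2⟩)
  · rintro h _ ⟨u, c, hu, rfl⟩
    have hφ : dotProductEquiv ℝ (Fin (d + 1)) (Fin.cons (-c) u) ≠ 0 := by
      rw [(dotProductEquiv ℝ _).map_ne_zero_iff]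
      exact fun hw => hu (funext fun i => congrFun hw i.succ)
    refine (h _ hφ).trans' (Set.encard_le_encard fun t ht => ⟨ht.1, ?_⟩)
    rw [hdual, ht.2.out, neg_add_cancel]

end Main

/-- For every integer `d ≥ 2` there exists `M = M(d)` such that every
`(d+1)`-crossing curve `γ : [a, b] → ℝ^d` can be subdivided into at most `M` convex
(`d`-crossing) curves: there are `k ≤ M` subdivision points `a = t 0 ≤ t 1 ≤ ⋯ ≤ t k = b`
such that `γ` restricted to each `[t j, t (j+1)]` is `d`-crossing. -/
theorem subdivision_of_curves :
    ∀ d : ℕ, 2 ≤ d → ∃ M : ℕ,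
      ∀ (a b : ℝ), a ≤ b → ∀ γ : ℝ → (Fin d → ℝ), ContinuousOn γ (Set.Icc a b) →
        CurveCrossing (d + 1) (Set.Icc a b) γ →
        ∃ k : ℕ, k ≤ M ∧ ∃ t : Fin (k + 1) → ℝ,
          t 0 = a ∧ t (Fin.last k) = b ∧ Monotone t ∧
          ∀ j : Fin k, CurveCrossing d (Set.Icc (t j.castSucc) (t j.succ)) γ := by
  intro d _
  obtain ⟨M, hM⟩ := exists_subdivision_zerosAtMost d
  refine ⟨M, fun a b hab γ hγ hcross => ?_⟩
  simp only [curveCrossing_iff_zerosAtMost] at hcross ⊢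
  have hcont : ContinuousOn (homogenize γ) (Icc a b) :=
    continuousOn_pi.2 (Fin.cases continuousOn_const fun i => continuousOn_pi.1 hγ i)
  have hne (t : ℝ) (_ : t ∈ Icc a b) : homogenize γ t ≠ 0 := fun h =>
    one_ne_zero (congrFun h 0)
  exact hM a b hab (homogenize γ) hcont hne hcross
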